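/- arXiv:1203.3619 — 5 statements merged into one kernel-verified Lean document; each statement's English description precedes it below -/
import Mathlib

section
/- In Stage One of SHALE, the dual values α are pointwise nondecreasing and bounded: for all iterations t and all contracts j, 0 ≤ α^t_j ≤ α^{t+1}_j ≤ p_j; consequently, for every j the sequence (α^t_j)_{t≥0} converges as t → ∞. -/
open Finset Filter Topology

noncomputable section

variable {I J : Type*} [Fintype I] [Fintype J]

open Classical in
/-- Γ(j): the impressions eligible for contract `j`. -/
def GammaD (adj : I → J → Prop) (j : J) : Finset I :=
  Finset.univ.filter (fun i => adj i j)

open Classical in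
/-- Γ(i): the contracts eligible for impression `i`. -/
def GammaS (adj : I → J → Prop) (i : I) : Finset J :=
  Finset.univ.filter (fun j => adj i j)

/-- Total eligible supply `S_j = ∑_{i ∈ Γ(j)} s_i`. -/
def Stot (adj : I → J → Prop) (s : I → ℝ) (j : J) : ℝ :=
  ∑ i ∈ GammaD adj j, s i

/-- Target `θ_{ij} = d_j / S_j` (independent of `i`). -/
def theta (adj : I → J → Prop) (s : I → ℝ) (d : J → ℝ) (j : J) : ℝ :=
  d j / Stot adj s j

/-- `g_{ij}(z) = max {0, θ_{ij} (1 + z / V_j)}` (independent of `i`). -/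
def gfun (adj : I → J → Prop) (s : I → ℝ) (d V : J → ℝ) (j : J) (z : ℝ) : ℝ :=
  max 0 ((theta adj s d j) * (1 + z / V j))

/-- `b` is a valid supply dual `β_i` for demand duals `α`: `b ≥ 0` and either `b = 0` with
`∑_{j ∈ Γ(i)} g_{ij}(α_j) ≤ 1`, or `∑_{j ∈ Γ(i)} g_{ij}(α_j − b) = 1`. -/
def BetaSpec (adj : I → J → Prop) (s : I → ℝ) (d V : J → ℝ)
    (α : J → ℝ) (i : I) (b : ℝ) : Prop :=
  0 ≤ b ∧ ((b = 0 ∧ ∑ j ∈ GammaS adj i, gfun adj s d V j (α j) ≤ 1) ∨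
    ∑ j ∈ GammaS adj i, gfun adj s d V j (α j - b) = 1)

/-- Stage One of SHALE: `α⁰ = 0`; `β^t_i` is a valid supply dual for `α^t`; and
`α^{t+1}_j = min (p_j) a_j` where `a_j` solves `∑_{i ∈ Γ(j)} s_i g_{ij}(a_j − β^t_i) = d_j`. -/
def StageOne (adj : I → J → Prop) (s : I → ℝ) (d p V : J → ℝ)
    (α : ℕ → J → ℝ) (β : ℕ → I → ℝ) : Prop :=
  (∀ j, α 0 j = 0) ∧
  (∀ t i, BetaSpec adj s d V (α t) i (β t i)) ∧
  (∀ t j, ∃ a : ℝ,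
    (∑ i ∈ GammaD adj j, s i * gfun adj s d V j (a - β t i) = d j) ∧
    α (t + 1) j = min (p j) a)

/-- Projected delivery `d_j(α) = ∑_{i ∈ Γ(j)} s_i g_{ij}(α_j − β_i)`. -/
def Dproj (adj : I → J → Prop) (s : I → ℝ) (d V : J → ℝ)
    (α : J → ℝ) (β : I → ℝ) (j : J) : ℝ :=
  ∑ i ∈ GammaD adj j, s i * gfun adj s d V j (α j - β i)

/-- The objective of the allocation problem. -/
def Fobj (adj : I → J → Prop) (s : I → ℝ) (d p V : J → ℝ)
    (x : I → J → ℝ) (u : J → ℝ) : ℝ :=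
  (1 / 2) * ∑ j, ∑ i ∈ GammaD adj j,
      s i * (V j / theta adj s d j) * (x i j - theta adj s d j) ^ 2
    + ∑ j, p j * u j

/-- Feasibility for the allocation problem. -/
def Feasible (adj : I → J → Prop) (s : I → ℝ) (d : J → ℝ)
    (x : I → J → ℝ) (u : J → ℝ) : Prop :=
  (∀ j, d j ≤ ∑ i ∈ GammaD adj j, s i * x i j + u j) ∧
  (∀ i, ∑ j ∈ GammaS adj i, x i j ≤ 1) ∧
  (∀ i j, adj i j → 0 ≤ x i j) ∧
  (∀ j, 0 ≤ u j)

/-- The KKT conditions for duals `(α, β)`. -/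
def KKT (adj : I → J → Prop) (s : I → ℝ) (d p V : J → ℝ)
    (α : J → ℝ) (β : I → ℝ) : Prop :=
  (∀ j, 0 ≤ α j ∧ α j ≤ p j) ∧
  (∀ i, 0 ≤ β i ∧ (∑ j ∈ GammaS adj i, gfun adj s d V j (α j - β i) ≤ 1) ∧
    (0 < β i → ∑ j ∈ GammaS adj i, gfun adj s d V j (α j - β i) = 1)) ∧
  (∀ j, (∑ i ∈ GammaD adj j, s i * gfun adj s d V j (α j - β i) ≤ d j) ∧
    (α j < p j → ∑ i ∈ GammaD adj j, s i * gfun adj s d V j (α j - β i) = d j))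

/-!
Raising the demand duals raises the supply duals, and raising the supply duals raises the demand
duals, so one round of Stage One is order preserving. Hence the iterates increase as soon as
`α⁰ ≤ α¹`. This holds because demand duals `0` meet every demand with equality if all supply duals
vanish, and the true supply duals are nonnegative. The caps `p` then force convergence.

Both monotonicity statements rest on one property of `gfun`: it is strictly increasing wherever it
is positive, so two positive sums of its values cannot agree at strictly ordered arguments.
-/

/-- A monotone function that increases strictly into every point where it is positive, such as
the positive part of a strictly increasing function. -/
structure StrictMonoWherePos {X M : Type*} [Preorder X] [Preorder M] [Zero M] (f : X → M) :
    Prop where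
  monotone : Monotone f
  lt_of_pos : ∀ ⦃x y : X⦄, x < y → 0 < f y → f x < f y

theorem strictMonoWherePos_max_zero {X M : Type*} [PartialOrder X] [LinearOrder M] [Zero M]
    {f : X → M} (hf : StrictMono f) : StrictMonoWherePos fun x => max 0 (f x) where
  monotone := monotone_const.max hf.monotone
  lt_of_pos _ _ hxy hy := max_lt hy ((hf hxy).trans_le (le_max_right _ _))

theorem StrictMonoWherePos.const_mul {X R : Type*} [Preorder X] [Semiring R] [LinearOrder R]
    [IsStrictOrderedRing R] {f : X → R} (hf : StrictMonoWherePos f) {c : R} (hc : 0 ≤ c) :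
    StrictMonoWherePos fun x => c * f x where
  monotone := hf.monotone.const_mul hc
  lt_of_pos _ _ hxy hy :=
    mul_lt_mul_of_pos_left (hf.lt_of_pos hxy (pos_of_mul_pos_right hy hc))
      (hc.lt_of_ne (left_ne_zero_of_mul hy.ne').symm)

theorem StrictMonoWherePos.sum_lt_sum {ι X M : Type*} [Preorder X] [AddCommMonoid M]
    [LinearOrder M] [IsOrderedCancelAddMonoid M] {A : Finset ι} {f : ι → X → M} {x y : ι → X}
    (hf : ∀ k ∈ A, StrictMonoWherePos (f k)) (hxy : ∀ k ∈ A, x k < y k)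
    (hpos : 0 < ∑ k ∈ A, f k (y k)) : ∑ k ∈ A, f k (x k) < ∑ k ∈ A, f k (y k) := by
  obtain ⟨k, hk, hfk⟩ : ∃ k ∈ A, 0 < f k (y k) :=
    Finset.exists_lt_of_sum_lt (by simpa only [Finset.sum_const_zero] using hpos)
  exact Finset.sum_lt_sum (fun l hl => (hf l hl).monotone (hxy l hl).le)
    ⟨k, hk, (hf k hk).lt_of_pos (hxy k hk) hfk⟩

section

variable {adj : I → J → Prop} {s : I → ℝ} {d p V : J → ℝ} {i : I} {j : J}

section Demand

omit [Fintype J]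

theorem theta_pos (hd : 0 < d j) (hS : 0 < Stot adj s j) : 0 < theta adj s d j :=
  div_pos hd hS

theorem strictMonoWherePos_gfun (hθ : 0 < theta adj s d j) (hV : 0 < V j) :
    StrictMonoWherePos (gfun adj s d V j) := by
  refine strictMonoWherePos_max_zero fun z w hzw => ?_
  gcongr

theorem gfun_zero (hθ : 0 ≤ theta adj s d j) : gfun adj s d V j 0 = theta adj s d j := by
  simp [gfun, hθ]

/-- `a` is an uncapped demand dual of contract `j` for the supply duals `β`: it solves
`∑_{i ∈ Γ(j)} s_i g_{ij}(a − β_i) = d_j`. It is the counterpart of `BetaSpec`. -/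
def AlphaSpec (adj : I → J → Prop) (s : I → ℝ) (d V : J → ℝ) (β : I → ℝ) (j : J) (a : ℝ) :
    Prop :=
  ∑ i ∈ GammaD adj j, s i * gfun adj s d V j (a - β i) = d j

theorem alphaSpec_zero (hd : 0 ≤ d j) (hS : 0 < Stot adj s j) : AlphaSpec adj s d V 0 j 0 :=
  calc ∑ i ∈ GammaD adj j, s i * gfun adj s d V j (0 - 0)
    _ = ∑ i ∈ GammaD adj j, s i * theta adj s d j := by
      rw [sub_zero, gfun_zero (div_nonneg hd hS.le)]
    _ = Stot adj s j * theta adj s d j := (Finset.sum_mul ..).symm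
    _ = d j := mul_div_cancel₀ _ hS.ne'

theorem AlphaSpec.mono {β β' : I → ℝ} {a a' : ℝ} (h : AlphaSpec adj s d V β j a)
    (h' : AlphaSpec adj s d V β' j a') (hs : ∀ i, 0 ≤ s i) (hd : 0 < d j) (hV : 0 < V j)
    (hS : 0 < Stot adj s j) (hβ : β ≤ β') : a ≤ a' := by
  by_contra! ha
  have hlt : ∑ i ∈ GammaD adj j, s i * gfun adj s d V j (a' - β' i) <
      ∑ i ∈ GammaD adj j, s i * gfun adj s d V j (a - β i) :=
    StrictMonoWherePos.sum_lt_sum (f := fun i z => s i * gfun adj s d V j z)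
      (fun i _ => (strictMonoWherePos_gfun (theta_pos hd hS) hV).const_mul (hs i))
      (fun i _ => by linarith [hβ i]) (hd.trans_eq h.symm)
  exact hlt.ne (h'.trans h.symm)

end Demand

theorem BetaSpec.sum_le_one {α : J → ℝ} {b : ℝ} (h : BetaSpec adj s d V α i b) :
    ∑ j ∈ GammaS adj i, gfun adj s d V j (α j - b) ≤ 1 := by
  obtain ⟨-, ⟨rfl, hle⟩ | heq⟩ := h
  · simpa only [sub_zero] using hle
  · exact heq.le

theorem BetaSpec.sum_eq_one_of_pos {α : J → ℝ} {b : ℝ} (h : BetaSpec adj s d V α i b)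
    (hb : 0 < b) : ∑ j ∈ GammaS adj i, gfun adj s d V j (α j - b) = 1 :=
  h.2.resolve_left fun hzero => hb.ne' hzero.1

theorem BetaSpec.mono {α α' : J → ℝ} {b b' : ℝ} (h : BetaSpec adj s d V α i b)
    (h' : BetaSpec adj s d V α' i b') (hθ : ∀ j, 0 < theta adj s d j) (hV : ∀ j, 0 < V j)
    (hα : α ≤ α') : b ≤ b' := by
  by_contra! hb
  have hmono (j : J) : StrictMonoWherePos (gfun adj s d V j) :=
    strictMonoWherePos_gfun (hθ j) (hV j)
  have harg (j : J) : α j - b < α' j - b' := by linarith [hα j]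
  have hone := h.sum_eq_one_of_pos (h'.1.trans_lt hb)
  have hpos : 0 < ∑ j ∈ GammaS adj i, gfun adj s d V j (α' j - b') :=
    calc (0 : ℝ) < 1 := one_pos
      _ = ∑ j ∈ GammaS adj i, gfun adj s d V j (α j - b) := hone.symm
      _ ≤ _ := Finset.sum_le_sum fun j _ => (hmono j).monotone (harg j).le
  have hlt : ∑ j ∈ GammaS adj i, gfun adj s d V j (α j - b) <
      ∑ j ∈ GammaS adj i, gfun adj s d V j (α' j - b') :=
    StrictMonoWherePos.sum_lt_sum (fun j _ => hmono j) (fun j _ => harg j) hpos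
  exact (hone.symm.trans_lt hlt).not_ge h'.sum_le_one

namespace StageOne

variable {α : ℕ → J → ℝ} {β : ℕ → I → ℝ}

theorem alpha_zero (h : StageOne adj s d p V α β) : α 0 = 0 :=
  funext h.1

theorem betaSpec (h : StageOne adj s d p V α β) (t : ℕ) (i : I) :
    BetaSpec adj s d V (α t) i (β t i) :=
  h.2.1 t i

theorem exists_alphaSpec (h : StageOne adj s d p V α β) (t : ℕ) (j : J) :
    ∃ a, AlphaSpec adj s d V (β t) j a ∧ α (t + 1) j = min (p j) a :=
  h.2.2 t j

theorem alpha_succ_le (h : StageOne adj s d p V α β) (t : ℕ) : α (t + 1) ≤ p := by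
  intro j
  obtain ⟨a, -, hα⟩ := h.exists_alphaSpec t j
  exact hα.trans_le (min_le_left _ _)

theorem alpha_zero_le_alpha_one (h : StageOne adj s d p V α β) (hs : ∀ i, 0 ≤ s i)
    (hd : ∀ j, 0 < d j) (hp : ∀ j, 0 ≤ p j) (hV : ∀ j, 0 < V j)
    (hS : ∀ j, 0 < Stot adj s j) : α 0 ≤ α 1 := by
  intro j
  obtain ⟨a, ha, hα⟩ := h.exists_alphaSpec 0 j
  rw [h.alpha_zero, hα]
  exact le_min (hp j) <| (alphaSpec_zero (hd j).le (hS j)).mono ha hs (hd j) (hV j) (hS j)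
    fun i => (h.betaSpec 0 i).1

theorem beta_le_beta (h : StageOne adj s d p V α β) (hθ : ∀ j, 0 < theta adj s d j)
    (hV : ∀ j, 0 < V j) {t u : ℕ} (hα : α t ≤ α u) : β t ≤ β u :=
  fun i => (h.betaSpec t i).mono (h.betaSpec u i) hθ hV hα

theorem alpha_succ_le_alpha_succ (h : StageOne adj s d p V α β) (hs : ∀ i, 0 ≤ s i)
    (hd : ∀ j, 0 < d j) (hV : ∀ j, 0 < V j) (hS : ∀ j, 0 < Stot adj s j) {t u : ℕ}
    (hβ : β t ≤ β u) : α (t + 1) ≤ α (u + 1) := by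
  intro j
  obtain ⟨a, ha, hαt⟩ := h.exists_alphaSpec t j
  obtain ⟨a', ha', hαu⟩ := h.exists_alphaSpec u j
  rw [hαt, hαu]
  exact min_le_min_left _ (ha.mono ha' hs (hd j) (hV j) (hS j) hβ)

theorem monotone_alpha (h : StageOne adj s d p V α β) (hs : ∀ i, 0 ≤ s i)
    (hd : ∀ j, 0 < d j) (hp : ∀ j, 0 ≤ p j) (hV : ∀ j, 0 < V j)
    (hS : ∀ j, 0 < Stot adj s j) : Monotone α := by
  refine monotone_nat_of_le_succ fun t => ?_
  induction t with
  | zero => exact h.alpha_zero_le_alpha_one hs hd hp hV hS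
  | succ t ih =>
    exact h.alpha_succ_le_alpha_succ hs hd hV hS
      (h.beta_le_beta (fun j => theta_pos (hd j) (hS j)) hV ih)

end StageOne

end

theorem shale_alpha_monotone_bounded_converges
    (adj : I → J → Prop) (s : I → ℝ) (d p V : J → ℝ)
    (hs : ∀ i, 0 < s i) (hd : ∀ j, 0 < d j) (hp : ∀ j, 0 < p j) (hV : ∀ j, 0 < V j)
    (hS : ∀ j, 0 < Stot adj s j)
    (α : ℕ → J → ℝ) (β : ℕ → I → ℝ) (hstage : StageOne adj s d p V α β) :
    (∀ t j, 0 ≤ α t j ∧ α t j ≤ α (t + 1) j ∧ α (t + 1) j ≤ p j) ∧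
    (∀ j, ∃ L : ℝ, Filter.Tendsto (fun t => α t j) Filter.atTop (𝓝 L)) := by
  have hmono : Monotone α :=
    hstage.monotone_alpha (fun i => (hs i).le) hd (fun j => (hp j).le) hV hS
  have hsucc (t : ℕ) : α t ≤ α (t + 1) := hmono t.le_succ
  have hnonneg (t : ℕ) : 0 ≤ α t := hstage.alpha_zero.ge.trans (hmono t.zero_le)
  have hcap (t : ℕ) : α (t + 1) ≤ p := hstage.alpha_succ_le t
  refine ⟨fun t j => ⟨hnonneg t j, hsucc t j, hcap t j⟩, fun j => ⟨⨆ t, α t j, ?_⟩⟩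
  have hbdd : BddAbove (Set.range fun t => α t j) :=
    ⟨p j, Set.forall_mem_range.2 fun t => (hsucc t j).trans (hcap t j)⟩
  exact tendsto_atTop_ciSup (fun _ _ htu => hmono htu j) hbdd

end
end

section
/- Well-definedness of the supply-dual step: for any α : J → ℝ and any impression i ∈ I, there exists a unique b ≥ 0 such that either b = 0 and Σ_{j∈Γ(i)} g_{ij}(α_j) ≤ 1, or Σ_{j∈Γ(i)} g_{ij}(α_j − b) = 1. -/
open Finset Filter Topology

noncomputable section

variable {I J : Type*} [Fintype I] [Fintype J]

/-!
Write `F b = ∑ j ∈ Γ(i), g_{ij} (α_j - b)`. Each summand is a strictly decreasing affine function of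
`b` truncated below at `0`, so `F` is continuous, antitone, eventually `0`, and strictly decreasing
wherever it is positive. In particular it takes the value `1` at most once. If `F 0 ≤ 1`, then
`b = 0` is a dual, and any `b ≥ 0` with `F b = 1` forces `F 0 = 1`, hence `b = 0`. Otherwise the
intermediate value theorem yields the dual.
-/

section OrderLemmas

theorem strictMonoOn_max_left {X Y : Type*} [Preorder X] [LinearOrder Y] {f : X → Y}
    (hf : StrictMono f) (c : Y) : StrictMonoOn (fun x ↦ max c (f x)) {x | c < max c (f x)} := by
  intro x _ y hy hxy
  have hcy : c < f y := by simpa using hy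
  exact (max_lt hcy (hf hxy)).trans_le (le_max_right _ _)

theorem strictAntiOn_sum_pos {ι X M : Type*} [Preorder X] [AddCommMonoid M] [LinearOrder M]
    [IsOrderedCancelAddMonoid M] {t : Finset ι} {f : ι → X → M}
    (hf : ∀ k ∈ t, Antitone (f k)) (hf' : ∀ k ∈ t, StrictAntiOn (f k) {x | 0 < f k x}) :
    StrictAntiOn (fun x ↦ ∑ k ∈ t, f k x) {x | 0 < ∑ k ∈ t, f k x} := by
  intro x _ y hy hxy
  obtain ⟨k, hk, hky⟩ : ∃ k ∈ t, 0 < f k y :=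
    exists_lt_of_sum_lt (f := fun _ ↦ (0 : M)) (by simpa using hy)
  have hkx : 0 < f k x := hky.trans_le (hf k hk hxy.le)
  exact sum_lt_sum (fun l hl ↦ hf l hl hxy.le) ⟨k, hk, hf' k hk hkx hky hxy⟩

theorem existsUnique_eq_left_or_map_eq {X Y : Type*} [ConditionallyCompleteLinearOrder X]
    [TopologicalSpace X] [OrderTopology X] [DenselyOrdered X]
    [LinearOrder Y] [TopologicalSpace Y] [OrderClosedTopology Y] {F : X → Y} {a : X} {c : Y}
    (hcont : ContinuousOn F (Set.Ici a)) (hanti : AntitoneOn F (Set.Ici a))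
    (hlevel : (Set.Ici a ∩ F ⁻¹' {c}).Subsingleton) (hle : ∃ x ∈ Set.Ici a, F x ≤ c) :
    ∃! b, a ≤ b ∧ ((b = a ∧ F a ≤ c) ∨ F b = c) := by
  rcases le_or_gt (F a) c with ha | ha
  · refine ⟨a, ⟨le_rfl, .inl ⟨rfl, ha⟩⟩, ?_⟩
    rintro b ⟨hab, ⟨rfl, _⟩ | hb⟩
    · rfl
    · have hca : F a = c := ha.antisymm (hb ▸ hanti le_rfl hab hab)
      exact hlevel ⟨hab, hb⟩ ⟨le_rfl, hca⟩
  · obtain ⟨x, hax, hx⟩ := hle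
    obtain ⟨b, ⟨hab, _⟩, hb⟩ :=
      intermediate_value_Icc' hax (hcont.mono Set.Icc_subset_Ici_self) ⟨hx, ha.le⟩
    refine ⟨b, ⟨hab, .inr hb⟩, ?_⟩
    rintro b' ⟨hab', ⟨_, ha'⟩ | hb'⟩
    · exact absurd ha' ha.not_ge
    · exact hlevel ⟨hab', hb'⟩ ⟨hab, hb⟩

end OrderLemmas

section Allocation

variable {adj : I → J → Prop} {s : I → ℝ} {d V : J → ℝ}

section Gfun

omit [Fintype J]

variable {j : J}

@[fun_prop]
theorem continuous_gfun : Continuous (gfun adj s d V j) := by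
  unfold gfun
  fun_prop

theorem monotone_gfun (hθ : 0 ≤ theta adj s d j) (hV : 0 ≤ V j) :
    Monotone (gfun adj s d V j) := by
  intro x y hxy
  unfold gfun
  gcongr

theorem strictMonoOn_gfun (hθ : 0 < theta adj s d j) (hV : 0 < V j) :
    StrictMonoOn (gfun adj s d V j) {z | 0 < gfun adj s d V j z} := by
  have haffine : StrictMono fun z ↦ theta adj s d j * (1 + z / V j) := by
    intro x y hxy
    dsimp only
    gcongr
  exact strictMonoOn_max_left haffine 0

theorem gfun_eq_zero_of_le_neg (hθ : 0 ≤ theta adj s d j) (hV : 0 < V j) {z : ℝ}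
    (hz : z ≤ -V j) : gfun adj s d V j z = 0 := by
  have hfactor : 1 + z / V j ≤ 0 := by
    have : z / V j ≤ -1 := by rwa [div_le_iff₀ hV, neg_one_mul]
    linarith
  exact max_eq_left (mul_nonpos_of_nonneg_of_nonpos hθ hfactor)

end Gfun

/-- The total fraction `∑_{j ∈ Γ(i)} g_{ij}(α_j - b)` of impression `i` that is allocated under the
demand duals `α`, as a function of the supply dual `b`. -/
def supplyLoad (adj : I → J → Prop) (s : I → ℝ) (d V : J → ℝ) (α : J → ℝ) (i : I) (b : ℝ) : ℝ :=
  ∑ j ∈ GammaS adj i, gfun adj s d V j (α j - b)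

variable {α : J → ℝ} {i : I}

theorem betaSpec_iff_supplyLoad {b : ℝ} :
    BetaSpec adj s d V α i b ↔
      0 ≤ b ∧ ((b = 0 ∧ supplyLoad adj s d V α i 0 ≤ 1) ∨ supplyLoad adj s d V α i b = 1) := by
  simp only [BetaSpec, supplyLoad, sub_zero]

theorem continuous_supplyLoad : Continuous (supplyLoad adj s d V α i) := by
  unfold supplyLoad
  fun_prop

theorem antitone_supplyLoad (hθ : ∀ j ∈ GammaS adj i, 0 ≤ theta adj s d j)
    (hV : ∀ j ∈ GammaS adj i, 0 ≤ V j) : Antitone (supplyLoad adj s d V α i) :=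
  fun _ _ hxy ↦ sum_le_sum fun j hj ↦
    monotone_gfun (hθ j hj) (hV j hj) (sub_le_sub_left hxy (α j))

theorem strictAntiOn_supplyLoad (hθ : ∀ j ∈ GammaS adj i, 0 < theta adj s d j)
    (hV : ∀ j ∈ GammaS adj i, 0 < V j) :
    StrictAntiOn (supplyLoad adj s d V α i) {b | 0 < supplyLoad adj s d V α i b} :=
  strictAntiOn_sum_pos
    (fun j hj _ _ hxy ↦ monotone_gfun (hθ j hj).le (hV j hj).le (sub_le_sub_left hxy (α j)))
    (fun j hj _ hx _ hy hxy ↦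
      strictMonoOn_gfun (hθ j hj) (hV j hj) hy hx (sub_lt_sub_left hxy (α j)))

theorem eventually_supplyLoad_eq_zero (hθ : ∀ j ∈ GammaS adj i, 0 ≤ theta adj s d j)
    (hV : ∀ j ∈ GammaS adj i, 0 < V j) : ∀ᶠ b in atTop, supplyLoad adj s d V α i b = 0 := by
  have hge : ∀ᶠ b in atTop, ∀ j ∈ GammaS adj i, α j + V j ≤ b :=
    (eventually_all_finset _).2 fun j _ ↦ eventually_ge_atTop (α j + V j)
  filter_upwards [hge] with b hb
  exact sum_eq_zero fun j hj ↦
    gfun_eq_zero_of_le_neg (hθ j hj) (hV j hj) (by linarith [hb j hj])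

end Allocation

theorem beta_step_well_defined
    (adj : I → J → Prop) (s : I → ℝ) (d p V : J → ℝ)
    (hs : ∀ i, 0 < s i) (hd : ∀ j, 0 < d j) (hp : ∀ j, 0 < p j) (hV : ∀ j, 0 < V j)
    (hS : ∀ j, 0 < Stot adj s j)
    (α : J → ℝ) (i : I) :
    ∃! b : ℝ, BetaSpec adj s d V α i b := by
  have hθ : ∀ j, 0 < theta adj s d j := fun j ↦ div_pos (hd j) (hS j)
  have hanti : Antitone (supplyLoad adj s d V α i) :=
    antitone_supplyLoad (fun j _ ↦ (hθ j).le) fun j _ ↦ (hV j).le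
  have hinj : Set.InjOn (supplyLoad adj s d V α i) {b | 0 < supplyLoad adj s d V α i b} :=
    (strictAntiOn_supplyLoad (fun j _ ↦ hθ j) fun j _ ↦ hV j).injOn
  have hlevel : (Set.Ici 0 ∩ supplyLoad adj s d V α i ⁻¹' {1}).Subsingleton := by
    rintro x ⟨_, hx : _ = 1⟩ y ⟨_, hy : _ = 1⟩
    exact hinj (by simp [hx]) (by simp [hy]) (hx.trans hy.symm)
  obtain ⟨B, hB, hB₀⟩ := ((eventually_ge_atTop 0).and <|
    eventually_supplyLoad_eq_zero (α := α) (fun j _ ↦ (hθ j).le) fun j _ ↦ hV j).exists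
  simp only [betaSpec_iff_supplyLoad]
  exact existsUnique_eq_left_or_map_eq continuous_supplyLoad.continuousOn (hanti.antitoneOn _)
    hlevel ⟨B, hB, hB₀.trans_le zero_le_one⟩

end
end

section
/- Well-definedness of the demand-dual step: for any β : I → ℝ and any contract j ∈ J (note Γ(j) ≠ ∅ since S_j > 0), there exists a unique a ∈ ℝ such that Σ_{i∈Γ(j)} s_i·g_{ij}(a − β_i) = d_j. -/
open Finset Filter Topology

noncomputable section

variable {I J : Type*} [Fintype I] [Fintype J]

/-!
With `y = a / V j`, the equation for `a` says that vessels of cross-section `s i * θ_j` and floor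
height `β i / V j - 1`, filled to the common level `y`, hold the volume `d j`. The volume is
continuous in the level, vanishes at low levels, tends to infinity, and increases strictly once it
is positive, so it takes every positive value exactly once.
-/

section WaterFilling

variable {ι 𝕜 : Type*} [Field 𝕜] [LinearOrder 𝕜] {S : Finset ι} {w b : ι → 𝕜}

/-- The water-filling function: the total volume held at water level `y` by vessels of
cross-section `w i` whose floor is at height `-b i`. -/
def waterVolume (S : Finset ι) (w b : ι → 𝕜) (y : 𝕜) : 𝕜 :=
  ∑ i ∈ S, w i * max 0 (y + b i)

theorem continuous_waterVolume [TopologicalSpace 𝕜] [OrderClosedTopology 𝕜]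
    [IsTopologicalSemiring 𝕜] (S : Finset ι) (w b : ι → 𝕜) :
    Continuous (waterVolume S w b) := by
  unfold waterVolume
  fun_prop

variable [IsStrictOrderedRing 𝕜]

theorem strictMonoOn_waterVolume (hw : ∀ i ∈ S, 0 ≤ w i) :
    StrictMonoOn (waterVolume S w b) {y | 0 < waterVolume S w b y} := by
  intro y hy z _ hyz
  obtain ⟨i, hi, hterm⟩ : ∃ i ∈ S, 0 < w i * max 0 (y + b i) :=
    Finset.exists_lt_of_sum_lt (Finset.sum_const_zero.trans_lt hy)
  have hwi : 0 < w i := pos_of_mul_pos_left hterm (le_max_left _ _)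
  have hwet : 0 < y + b i := by
    simpa only [lt_max_iff, lt_self_iff_false, false_or] using pos_of_mul_pos_right hterm hwi.le
  refine Finset.sum_lt_sum (fun k hk => ?_) ⟨i, hi, ?_⟩
  · exact mul_le_mul_of_nonneg_left (by gcongr) (hw k hk)
  · rw [max_eq_right hwet.le]
    exact mul_lt_mul_of_pos_left (lt_max_of_lt_right (by gcongr)) hwi

theorem eventually_atBot_waterVolume_eq_zero (S : Finset ι) (w b : ι → 𝕜) :
    ∀ᶠ y in atBot, waterVolume S w b y = 0 := by
  have hdry : ∀ᶠ y in atBot, ∀ i ∈ S, y ≤ -b i :=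
    (Filter.eventually_all_finset S).2 fun i _ => eventually_le_atBot (-b i)
  filter_upwards [hdry] with y hy
  refine Finset.sum_eq_zero fun i hi => ?_
  rw [max_eq_left (le_neg_iff_add_nonpos_right.1 (hy i hi)), mul_zero]

theorem tendsto_waterVolume_atTop (hw : ∀ i ∈ S, 0 ≤ w i) (hpos : ∃ i ∈ S, 0 < w i) :
    Tendsto (waterVolume S w b) atTop atTop := by
  obtain ⟨i, hi, hwi⟩ := hpos
  have hvessel : Tendsto (fun y => w i * (y + b i)) atTop atTop :=
    (tendsto_atTop_add_const_right _ (b i) tendsto_id).const_mul_atTop hwi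
  refine tendsto_atTop_mono (fun y => ?_) hvessel
  calc w i * (y + b i) ≤ w i * max 0 (y + b i) := by gcongr; exact le_max_right _ _
    _ ≤ waterVolume S w b y :=
      Finset.single_le_sum (f := fun k => w k * max 0 (y + b k))
        (fun k hk => mul_nonneg (hw k hk) (le_max_left _ _)) hi

theorem existsUnique_waterVolume_eq [TopologicalSpace 𝕜] [OrderClosedTopology 𝕜]
    [IsTopologicalSemiring 𝕜] [PreconnectedSpace 𝕜] (hw : ∀ i ∈ S, 0 ≤ w i)
    (hpos : ∃ i ∈ S, 0 < w i) {c : 𝕜} (hc : 0 < c) : ∃! y, waterVolume S w b y = c := by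
  obtain ⟨y₀, hy₀⟩ := (eventually_atBot_waterVolume_eq_zero S w b).exists
  obtain ⟨y₁, hy₁⟩ := ((tendsto_waterVolume_atTop hw hpos).eventually_ge_atTop c).exists
  obtain ⟨y, hy⟩ := mem_range_of_exists_le_of_exists_ge (continuous_waterVolume S w b)
    ⟨y₀, hy₀.trans_le hc.le⟩ ⟨y₁, hy₁⟩
  refine ⟨y, hy, fun z hz => ?_⟩
  exact (strictMonoOn_waterVolume hw).injOn (hc.trans_eq hz.symm) (hc.trans_eq hy.symm)
    (hz.trans hy.symm)

end WaterFilling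

omit [Fintype J] in
theorem sum_mul_gfun_sub_eq_waterVolume {adj : I → J → Prop} {s : I → ℝ} {d : J → ℝ} {j : J}
    (hθ : 0 ≤ theta adj s d j) (V : J → ℝ) (β : I → ℝ) (a : ℝ) :
    ∑ i ∈ GammaD adj j, s i * gfun adj s d V j (a - β i) =
      waterVolume (GammaD adj j) (fun i => s i * theta adj s d j) (fun i => 1 - β i / V j)
        (a / V j) := by
  refine Finset.sum_congr rfl fun i _ => ?_
  have haffine : 1 + (a - β i) / V j = a / V j + (1 - β i / V j) := by ring
  rw [gfun, haffine, mul_assoc, mul_max_of_nonneg _ _ hθ, mul_zero]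

omit [Fintype J] in
theorem alpha_step_well_defined_general
    (adj : I → J → Prop) (s : I → ℝ) (d V : J → ℝ) (j : J)
    (hs : ∀ i ∈ GammaD adj j, 0 ≤ s i) (hd : 0 < d j) (hV : V j ≠ 0)
    (hS : 0 < Stot adj s j) (β : I → ℝ) :
    ∃! a : ℝ, ∑ i ∈ GammaD adj j, s i * gfun adj s d V j (a - β i) = d j := by
  have hθ : 0 < theta adj s d j := div_pos hd hS
  obtain ⟨i, hi, hsi⟩ : ∃ i ∈ GammaD adj j, 0 < s i := (Finset.sum_pos_iff_of_nonneg hs).1 hS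
  have hlevel : ∃! y, waterVolume (GammaD adj j) (fun i => s i * theta adj s d j)
      (fun i => 1 - β i / V j) y = d j :=
    existsUnique_waterVolume_eq (fun k hk => mul_nonneg (hs k hk) hθ.le)
      ⟨i, hi, mul_pos hsi hθ⟩ hd
  simp only [sum_mul_gfun_sub_eq_waterVolume hθ.le]
  exact (Equiv.divRight₀ (V j) hV).bijective.existsUnique_iff.1 hlevel

theorem alpha_step_well_defined
    (adj : I → J → Prop) (s : I → ℝ) (d p V : J → ℝ)
    (hs : ∀ i, 0 < s i) (hd : ∀ j, 0 < d j) (hp : ∀ j, 0 < p j) (hV : ∀ j, 0 < V j)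
    (hS : ∀ j, 0 < Stot adj s j)
    (β : I → ℝ) (j : J) :
    ∃! a : ℝ, ∑ i ∈ GammaD adj j, s i * gfun adj s d V j (a - β i) = d j := by
  exact alpha_step_well_defined_general adj s d V j
    (fun i _ => (hs i).le) (hd j) (hV j).ne' (hS j) β

end
end

section
/- KKT sufficiency for the allocation problem: suppose α : J → ℝ and β : I → ℝ satisfy (i) 0 ≤ α_j ≤ p_j for all j; (ii) β_i ≥ 0 and Σ_{j∈Γ(i)} g_{ij}(α_j − β_i) ≤ 1 for all i, with equality whenever β_i > 0; (iii) Σ_{i∈Γ(j)} s_i·g_{ij}(α_j − β_i) ≤ d_j for all j, with equality whenever α_j < p_j. Define x_{ij} = g_{ij}(α_j − β_i) for i ∈ Γ(j) and u_j = d_j − Σ_{i∈Γ(j)} s_i·x_{ij}. Then (x,u) is feasible for the allocation problem and F(x,u) ≤ F(x′,u′) for every feasible (x′,u′). -/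
open Finset Filter Topology

noncomputable section

variable {I J : Type*} [Fintype I] [Fintype J]

/-!
Convex duality: give the demand constraint of `j` the multiplier `α j` and the supply constraint of
`i` the multiplier `s i * β i`. The Lagrangian then separates over the edges of the graph.
Completing the square on an edge gives a positive multiple of the squared distance from `x i j` to
the point `θ (1 + (α j - β i) / V j)`, and `gfun` is the projection of that point onto `[0, ∞)`, so
`x` minimises the Lagrangian. On the feasible set the Lagrangian is at most the objective, and
complementary slackness makes the two agree at `(x, u)`.
-/

section Quadratic

lemma sq_max_sub_le_sq_sub {R : Type*} [Ring R] [LinearOrder R] [IsOrderedRing R] {a b y : R}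
    (hy : b ≤ y) : (max b a - a) ^ 2 ≤ (y - a) ^ 2 := by
  rcases le_total a b with hab | hba
  · rw [max_eq_left hab]
    exact pow_le_pow_left₀ (sub_nonneg.2 hab) (sub_le_sub_right hy a) 2
  · rw [max_eq_right hba, sub_self, zero_pow two_ne_zero]
    exact sq_nonneg _

lemma mul_sq_sub_two_mul_eq {K : Type*} [Field K] {t V : K} (ht : t ≠ 0) (hV : V ≠ 0) (z y : K) :
    V / t * (y - t) ^ 2 - 2 * (z * y) =
      V / t * (y - t * (1 + z / V)) ^ 2 - t * z * (2 + z / V) := by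
  field_simp
  ring

lemma isMinOn_max_zero_mul_one_add_div {K : Type*} [Field K] [LinearOrder K] [IsStrictOrderedRing K]
    {t V : K} (ht : 0 < t) (hV : 0 < V) (z : K) :
    IsMinOn (fun y => V / t * (y - t) ^ 2 - 2 * (z * y)) (Set.Ici 0)
      (max 0 (t * (1 + z / V))) := by
  refine isMinOn_iff.2 fun y hy => ?_
  simp only [mul_sq_sub_two_mul_eq ht.ne' hV.ne']
  gcongr ?_ * ?_ - _
  exact sq_max_sub_le_sq_sub hy

end Quadratic

section Allocation

variable {adj : I → J → Prop} {s : I → ℝ} {d p V : J → ℝ} {α : J → ℝ} {β : I → ℝ}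
  {x x' : I → J → ℝ} {u u' : J → ℝ}

omit [Fintype J] in
lemma mem_GammaD {i : I} {j : J} : i ∈ GammaD adj j ↔ adj i j := by
  simp [GammaD]

omit [Fintype I] in
lemma mem_GammaS {i : I} {j : J} : j ∈ GammaS adj i ↔ adj i j := by
  simp [GammaS]

lemma sum_GammaD_comm {M : Type*} [AddCommMonoid M] (f : I → J → M) :
    ∑ j, ∑ i ∈ GammaD adj j, f i j = ∑ i, ∑ j ∈ GammaS adj i, f i j :=
  Finset.sum_comm' fun j i => by simp [mem_GammaD, mem_GammaS]

/-- The Lagrangian of the allocation problem for the duals `(α, β)`. The sign constraints on `x` and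
`u` are not dualized, and the multiplier of the supply constraint of `i` is scaled to `s i * β i`,
which makes `α j - β i` the price of the edge `(i, j)`. -/
def lagrangian (adj : I → J → Prop) (s : I → ℝ) (d p V : J → ℝ) (α : J → ℝ) (β : I → ℝ)
    (x : I → J → ℝ) (u : J → ℝ) : ℝ :=
  Fobj adj s d p V x u
    + ∑ j, α j * (d j - (∑ i ∈ GammaD adj j, s i * x i j + u j))
    + ∑ i, s i * (β i * (∑ j ∈ GammaS adj i, x i j - 1))

lemma lagrangian_eq_sum_edges :
    lagrangian adj s d p V α β x u =
      1 / 2 * ∑ j, ∑ i ∈ GammaD adj j, s i *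
          (V j / theta adj s d j * (x i j - theta adj s d j) ^ 2 - 2 * ((α j - β i) * x i j))
        + ∑ j, (p j - α j) * u j + (∑ j, α j * d j - ∑ i, s i * β i) := by
  have supply_by_edges : ∑ i, s i * (β i * ∑ j ∈ GammaS adj i, x i j) =
      ∑ j, ∑ i ∈ GammaD adj j, s i * (β i * x i j) := by
    simp only [sum_GammaD_comm, Finset.mul_sum]
  have demand_by_edges : ∑ j, α j * ∑ i ∈ GammaD adj j, s i * x i j =
      ∑ j, ∑ i ∈ GammaD adj j, s i * (α j * x i j) := by
    simp only [Finset.mul_sum, mul_left_comm]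
  simp only [lagrangian, Fobj, mul_sub, mul_add, sub_mul, mul_one, Finset.sum_sub_distrib,
    Finset.sum_add_distrib, supply_by_edges, demand_by_edges, mul_left_comm _ (2 : ℝ),
    ← Finset.mul_sum, mul_assoc]
  ring

lemma lagrangian_le_Fobj (hs : ∀ i, 0 ≤ s i) (hα : ∀ j, 0 ≤ α j) (hβ : ∀ i, 0 ≤ β i)
    (h : Feasible adj s d x u) :
    lagrangian adj s d p V α β x u ≤ Fobj adj s d p V x u := by
  obtain ⟨hdemand, hsupply, -, -⟩ := h
  have demand_nonpos : ∑ j, α j * (d j - (∑ i ∈ GammaD adj j, s i * x i j + u j)) ≤ 0 :=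
    Finset.sum_nonpos fun j _ =>
      mul_nonpos_of_nonneg_of_nonpos (hα j) (sub_nonpos.2 (hdemand j))
  have supply_nonpos : ∑ i, s i * (β i * (∑ j ∈ GammaS adj i, x i j - 1)) ≤ 0 :=
    Finset.sum_nonpos fun i _ => mul_nonpos_of_nonneg_of_nonpos (hs i) <|
      mul_nonpos_of_nonneg_of_nonpos (hβ i) (sub_nonpos.2 (hsupply i))
  rw [lagrangian]
  linarith

lemma lagrangian_eq_Fobj
    (hdemand : ∀ j, α j * (d j - (∑ i ∈ GammaD adj j, s i * x i j + u j)) = 0)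
    (hsupply : ∀ i, β i * (∑ j ∈ GammaS adj i, x i j - 1) = 0) :
    lagrangian adj s d p V α β x u = Fobj adj s d p V x u := by
  simp [lagrangian, hdemand, hsupply]

lemma lagrangian_le_lagrangian (hs : ∀ i, 0 ≤ s i) (hθ : ∀ j, 0 < theta adj s d j)
    (hV : ∀ j, 0 < V j) (hx : ∀ i j, adj i j → x i j = gfun adj s d V j (α j - β i))
    (hu : ∀ j, (p j - α j) * u j = 0) (hx' : ∀ i j, adj i j → 0 ≤ x' i j)
    (hu' : ∀ j, 0 ≤ (p j - α j) * u' j) :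
    lagrangian adj s d p V α β x u ≤ lagrangian adj s d p V α β x' u' := by
  simp only [lagrangian_eq_sum_edges]
  gcongr 1 / 2 * ∑ j, ∑ i ∈ _, s i * ?_ + ∑ j, ?_ + _ with j _ i hi j
  · exact hs i
  · have hij : adj i j := mem_GammaD.1 hi
    rw [hx i j hij]
    exact isMinOn_max_zero_mul_one_add_div (hθ j) (hV j) _ (hx' i j hij)
  · exact (hu j).trans_le (hu' j)

lemma KKT.supply_slackness (h : KKT adj s d p V α β) (i : I) :
    β i * (∑ j ∈ GammaS adj i, gfun adj s d V j (α j - β i) - 1) = 0 := by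
  obtain ⟨hβ, -, hsum⟩ := h.2.1 i
  rcases hβ.eq_or_lt with hzero | hpos
  · rw [← hzero, zero_mul]
  · rw [hsum hpos, sub_self, mul_zero]

lemma KKT.shortfall_slackness (h : KKT adj s d p V α β) (j : J) :
    (p j - α j) * (d j - ∑ i ∈ GammaD adj j, s i * gfun adj s d V j (α j - β i)) = 0 := by
  rcases (h.1 j).2.eq_or_lt with heq | hlt
  · rw [heq, sub_self, zero_mul]
  · rw [(h.2.2 j).2 hlt, sub_self, mul_zero]

end Allocation

theorem kkt_sufficiency
    (adj : I → J → Prop) (s : I → ℝ) (d p V : J → ℝ)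
    (hs : ∀ i, 0 < s i) (hd : ∀ j, 0 < d j) (hp : ∀ j, 0 < p j) (hV : ∀ j, 0 < V j)
    (hS : ∀ j, 0 < Stot adj s j)
    (α : J → ℝ) (β : I → ℝ) (hkkt : KKT adj s d p V α β)
    (x : I → J → ℝ) (u : J → ℝ)
    (hx : ∀ i j, adj i j → x i j = gfun adj s d V j (α j - β i))
    (hu : ∀ j, u j = d j - ∑ i ∈ GammaD adj j, s i * gfun adj s d V j (α j - β i)) :
    Feasible adj s d x u ∧
      ∀ x' u', Feasible adj s d x' u' →
        Fobj adj s d p V x u ≤ Fobj adj s d p V x' u' := by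
  have hdemand (j : J) : ∑ i ∈ GammaD adj j, s i * x i j + u j = d j := by
    rw [hu j, Finset.sum_congr rfl fun i hi => by rw [hx i j (mem_GammaD.1 hi)], add_sub_cancel]
  have hsupply (i : I) :
      ∑ j ∈ GammaS adj i, x i j = ∑ j ∈ GammaS adj i, gfun adj s d V j (α j - β i) :=
    Finset.sum_congr rfl fun j hj => hx i j (mem_GammaS.1 hj)
  have hfeasible : Feasible adj s d x u :=
    ⟨fun j => (hdemand j).ge, fun i => (hsupply i).trans_le (hkkt.2.1 i).2.1,
      fun i j hij => (hx i j hij).symm ▸ le_max_left _ _,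
      fun j => (hu j).symm ▸ sub_nonneg.2 (hkkt.2.2 j).1⟩
  refine ⟨hfeasible, fun x' u' hfeasible' => ?_⟩
  calc Fobj adj s d p V x u = lagrangian adj s d p V α β x u :=
        (lagrangian_eq_Fobj (fun j => by rw [hdemand j, sub_self, mul_zero])
          fun i => by rw [hsupply i, hkkt.supply_slackness i]).symm
    _ ≤ lagrangian adj s d p V α β x' u' :=
        lagrangian_le_lagrangian (fun i => (hs i).le) (fun j => div_pos (hd j) (hS j)) hV hx
          (fun j => by rw [hu j, hkkt.shortfall_slackness j]) hfeasible'.2.2.1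
          fun j => mul_nonneg (sub_nonneg.2 (hkkt.1 j).2) (hfeasible'.2.2.2 j)
    _ ≤ Fobj adj s d p V x' u' :=
        lagrangian_le_Fobj (fun i => (hs i).le) (fun j => (hkkt.1 j).1)
          (fun i => (hkkt.2.1 i).1) hfeasible'

end
end

section
/- Uniqueness of the optimal allocation: if (x,u) and (x′,u′) are both feasible for the allocation problem and both minimize F over the feasible set, then x_{ij} = x′_{ij} for every arc i ∈ Γ(j). -/
open Finset Filter Topology

noncomputable section

variable {I J : Type*} [Fintype I] [Fintype J]

/-!
The objective is a linear penalty in `u` plus a strictly convex function of the arc values of `x`.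
At the midpoint of two minimizers with different arc values the objective would be strictly below
the minimum, and the midpoint is feasible because the feasible set is convex.
-/

section Convexity

variable {𝕜 β : Type*}

theorem strictConvexOn_mul_sub_sq [CommRing 𝕜] [LinearOrder 𝕜] [IsStrictOrderedRing 𝕜]
    {c : 𝕜} (hc : 0 < c) (t : 𝕜) :
    StrictConvexOn 𝕜 Set.univ fun r : 𝕜 ↦ c * (r - t) ^ 2 := by
  refine ⟨convex_univ, fun x _ y _ hxy a b ha hb hab ↦ ?_⟩
  have gap : a * (c * (x - t) ^ 2) + b * (c * (y - t) ^ 2) - c * (a * x + b * y - t) ^ 2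
      = a * b * c * (x - y) ^ 2 := by
    obtain rfl := eq_sub_of_add_eq hab
    ring
  have gap_pos : 0 < a * b * c * (x - y) ^ 2 :=
    mul_pos (mul_pos (mul_pos ha hb) hc) (sq_pos_of_ne_zero (sub_ne_zero.mpr hxy))
  exact sub_pos.mp (gap ▸ gap_pos)

theorem strictConvexOn_sum_pi [Semiring 𝕜] [PartialOrder 𝕜]
    [AddCommMonoid β] [PartialOrder β] [IsOrderedCancelAddMonoid β] [Module 𝕜 β]
    {ι : Type*} [Fintype ι] {E : ι → Type*} [∀ i, AddCommMonoid (E i)]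
    [∀ i, Module 𝕜 (E i)]
    {C : ∀ i, Set (E i)} {f : ∀ i, E i → β} (hf : ∀ i, StrictConvexOn 𝕜 (C i) (f i)) :
    StrictConvexOn 𝕜 (Set.univ.pi C) fun x ↦ ∑ i, f i (x i) := by
  refine ⟨convex_pi fun i _ ↦ (hf i).1, fun x hx y hy hxy a b ha hb hab ↦ ?_⟩
  obtain ⟨k, hk⟩ := Function.ne_iff.mp hxy
  calc ∑ i, f i (a • x i + b • y i)
      < ∑ i, (a • f i (x i) + b • f i (y i)) :=
        sum_lt_sum
          (fun i _ ↦ (hf i).convexOn.2 (hx i trivial) (hy i trivial) ha.le hb.le hab)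
          ⟨k, mem_univ k, (hf k).2 (hx k trivial) (hy k trivial) hk ha hb hab⟩
    _ = a • ∑ i, f i (x i) + b • ∑ i, f i (y i) := by
        rw [sum_add_distrib, smul_sum, smul_sum]

theorem map_eq_of_isMinOn_add_strictConvexOn [Field 𝕜] [LinearOrder 𝕜] [IsStrictOrderedRing 𝕜]
    [AddCommMonoid β] [PartialOrder β] [IsOrderedCancelAddMonoid β] [Module 𝕜 β]
    [PosSMulMono 𝕜 β]
    {E F : Type*} [AddCommMonoid E] [Module 𝕜 E] [AddCommMonoid F] [Module 𝕜 F]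
    {C : Set E} {D : Set F} {g : E → β} {h : F → β} {L : E →ₗ[𝕜] F}
    (hg : ConvexOn 𝕜 C g) (hh : StrictConvexOn 𝕜 D h) (hL : Set.MapsTo L C D)
    {x y : E} (hx : x ∈ C) (hy : y ∈ C)
    (hminx : IsMinOn (fun z ↦ g z + h (L z)) C x)
    (hminy : IsMinOn (fun z ↦ g z + h (L z)) C y) :
    L x = L y := by
  by_contra hxy
  have half_pos : (0 : 𝕜) < 2⁻¹ := by positivity
  have halves : (2⁻¹ : 𝕜) + 2⁻¹ = 1 := by norm_num
  let z := (2⁻¹ : 𝕜) • x + (2⁻¹ : 𝕜) • y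
  have hz : z ∈ C := hg.1 hx hy half_pos.le half_pos.le halves
  have hgz : g z ≤ (2⁻¹ : 𝕜) • g x + (2⁻¹ : 𝕜) • g y :=
    hg.2 hx hy half_pos.le half_pos.le halves
  have hhz : h (L z) < (2⁻¹ : 𝕜) • h (L x) + (2⁻¹ : 𝕜) • h (L y) := by
    simpa only [z, map_add, map_smul] using hh.2 (hL hx) (hL hy) hxy half_pos half_pos halves
  refine lt_irrefl (g z + h (L z)) ?_
  calc g z + h (L z)
      < ((2⁻¹ : 𝕜) • g x + (2⁻¹ : 𝕜) • g y) + ((2⁻¹ : 𝕜) • h (L x) + (2⁻¹ : 𝕜) • h (L y)) :=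
        add_lt_add_of_le_of_lt hgz hhz
    _ = (2⁻¹ : 𝕜) • (g x + h (L x)) + (2⁻¹ : 𝕜) • (g y + h (L y)) := by
        rw [smul_add, smul_add, add_add_add_comm]
    _ ≤ (2⁻¹ : 𝕜) • (g z + h (L z)) + (2⁻¹ : 𝕜) • (g z + h (L z)) :=
        add_le_add (smul_le_smul_of_nonneg_left (hminx hz) half_pos.le)
          (smul_le_smul_of_nonneg_left (hminy hz) half_pos.le)
    _ = g z + h (L z) := Convex.combo_self halves _

theorem convexOn_dotProduct_snd [CommSemiring 𝕜] [PartialOrder 𝕜]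
    {E ι : Type*} [AddCommMonoid E] [Module 𝕜 E] [Fintype ι]
    {C : Set (E × (ι → 𝕜))} (hC : Convex 𝕜 C) (p : ι → 𝕜) :
    ConvexOn 𝕜 C fun z ↦ p ⬝ᵥ z.2 :=
  (dotProductBilin 𝕜 𝕜 p ∘ₗ LinearMap.snd 𝕜 E (ι → 𝕜)).convexOn hC

end Convexity

section Allocation

variable (adj : I → J → Prop) (s : I → ℝ) (d p V : J → ℝ)

theorem convex_setOf_feasible :
    Convex ℝ {z : (I → J → ℝ) × (J → ℝ) | Feasible adj s d z.1 z.2} := by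
  simp only [Feasible, Set.ofPred_and, Set.ofPred_forall]
  refine .inter (convex_iInter fun j ↦ convex_halfSpace_ge ⟨fun z w ↦ ?_, fun c z ↦ ?_⟩ _) <|
    .inter (convex_iInter fun i ↦ convex_halfSpace_le ⟨fun z w ↦ ?_, fun c z ↦ ?_⟩ _) <|
    .inter (convex_iInter fun i ↦ convex_iInter fun j ↦ convex_iInter fun _ ↦
      convex_halfSpace_ge ⟨fun z w ↦ rfl, fun c z ↦ rfl⟩ _)
    (convex_iInter fun j ↦ convex_halfSpace_ge ⟨fun z w ↦ rfl, fun c z ↦ rfl⟩ _)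
  · simp only [Prod.fst_add, Prod.snd_add, Pi.add_apply, mul_add, sum_add_distrib]
    ring
  · simp only [Prod.smul_fst, Prod.smul_snd, Pi.smul_apply, smul_eq_mul, mul_add, mul_sum,
      mul_left_comm]
  · simp only [Prod.fst_add, Pi.add_apply, sum_add_distrib]
  · simp only [Prod.smul_fst, Pi.smul_apply, smul_sum]

/-- The values of an allocation on the arcs, as a linear map. Only these enter the quadratic part
of `Fobj`, which does not control `x i j` for `i ∉ Γ(j)`. -/
def arcValues : (I → J → ℝ) × (J → ℝ) →ₗ[ℝ] (∀ j, GammaD adj j → ℝ) where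
  toFun z j i := z.1 i j
  map_add' _ _ := rfl
  map_smul' _ _ := rfl

/-- The non-representativeness of arc values `y`: the quadratic part of the objective, which
measures the weighted deviation of `y` from the targets. -/
def nonRepresentativeness (y : ∀ j, GammaD adj j → ℝ) : ℝ :=
  ∑ j, ∑ i : GammaD adj j,
    1 / 2 * (s i * (V j / theta adj s d j)) * (y j i - theta adj s d j) ^ 2

theorem Fobj_eq_penalty_add_nonRepresentativeness (z : (I → J → ℝ) × (J → ℝ)) :
    Fobj adj s d p V z.1 z.2 =
      p ⬝ᵥ z.2 + nonRepresentativeness adj s d V (arcValues adj z) := by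
  have sum_over_arcs : nonRepresentativeness adj s d V (arcValues adj z) =
      ∑ j, ∑ i ∈ GammaD adj j,
        1 / 2 * (s i * (V j / theta adj s d j)) * (z.1 i j - theta adj s d j) ^ 2 :=
    sum_congr rfl fun j _ ↦ sum_coe_sort (GammaD adj j) fun i ↦
      1 / 2 * (s i * (V j / theta adj s d j)) * (z.1 i j - theta adj s d j) ^ 2
  simp only [sum_over_arcs, Fobj, dotProduct, mul_sum, mul_assoc, add_comm]

variable {adj s d V} in
theorem strictConvexOn_nonRepresentativeness
    (hs : ∀ i, 0 < s i) (hd : ∀ j, 0 < d j) (hV : ∀ j, 0 < V j) (hS : ∀ j, 0 < Stot adj s j) :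
    StrictConvexOn ℝ Set.univ (nonRepresentativeness adj s d V) := by
  have weight_pos (i : I) (j : J) : 0 < 1 / 2 * (s i * (V j / theta adj s d j)) :=
    mul_pos one_half_pos (mul_pos (hs i) (div_pos (hV j) (div_pos (hd j) (hS j))))
  have contract_strictConvexOn (j : J) := strictConvexOn_sum_pi fun i : GammaD adj j ↦
    strictConvexOn_mul_sub_sq (weight_pos i j) (theta adj s d j)
  simpa only [Set.pi_univ] using! strictConvexOn_sum_pi contract_strictConvexOn

end Allocation

theorem optimal_allocation_unique
    (adj : I → J → Prop) (s : I → ℝ) (d p V : J → ℝ)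
    (hs : ∀ i, 0 < s i) (hd : ∀ j, 0 < d j) (hp : ∀ j, 0 < p j) (hV : ∀ j, 0 < V j)
    (hS : ∀ j, 0 < Stot adj s j)
    (x x' : I → J → ℝ) (u u' : J → ℝ)
    (hfeas : Feasible adj s d x u) (hfeas' : Feasible adj s d x' u')
    (hmin : ∀ y v, Feasible adj s d y v → Fobj adj s d p V x u ≤ Fobj adj s d p V y v)
    (hmin' : ∀ y v, Feasible adj s d y v → Fobj adj s d p V x' u' ≤ Fobj adj s d p V y v) :
    ∀ i j, adj i j → x i j = x' i j := by
  intro i j hij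
  have hC := convex_setOf_feasible adj s d
  have arcValues_eq : arcValues adj (x, u) = arcValues adj (x', u') := by
    refine map_eq_of_isMinOn_add_strictConvexOn (convexOn_dotProduct_snd hC p)
      (strictConvexOn_nonRepresentativeness hs hd hV hS) (Set.mapsTo_univ _ _) hfeas hfeas' ?_ ?_
    all_goals
      simp only [← Fobj_eq_penalty_add_nonRepresentativeness]
      rintro ⟨y, v⟩ hyv
    · exact hmin y v hyv
    · exact hmin' y v hyv
  have hi : i ∈ GammaD adj j := by simpa [GammaD] using hij
  exact congr_fun (congr_fun arcValues_eq j) ⟨i, hi⟩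

end
end
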